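/- arXiv:1106.5598 — 5 statements merged into one kernel-verified Lean document; each statement's English description precedes it below -/
import Mathlib

section
/- Let n, m ≥ 1 be integers, let X₁,…,Xₙ be i.i.d. uniform on [0,1], and let Y₁,…,Yₘ be i.i.d. with law ν on ℝ having continuous cumulative distribution function G satisfying G(x) ≥ x for all x ∈ [0,1], the Y's independent of the X's. Then P(max(Y₁,…,Yₘ) < min(X₁,…,Xₙ)) ≥ n!·m!/(n+m)!, where n!·m!/(n+m)! is the value of this probability when ν is the uniform distribution on [0,1]. -/
open MeasureTheory

/-!
The event is `max Y < M` with `M = min X`. Given `M = t`, independence makes its probability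
`∏ⱼ νⱼ (Iio t)`, and each factor is at least `t` because `νⱼ (Iio t) ≥ νⱼ (Iic s) ≥ s` for
`0 < s < t`. The minimum of `n` independent uniform variables has the `Beta(1, n)` distribution, so
the probability is at least the `m`-th moment `B(1 + m, n) / B(1, n) = n! m! / (n + m)!`.
-/

open ProbabilityTheory Set Filter Topology

lemma le_measure_Iio_of_eventually_le_measure_Iic {α : Type*} [Preorder α] [TopologicalSpace α]
    [MeasurableSpace α] {μ : Measure α} {f : α → ENNReal} {x : α} [(𝓝[<] x).NeBot]
    (hf : ContinuousWithinAt f (Iio x) x) (hle : ∀ᶠ y in 𝓝[<] x, f y ≤ μ (Iic y)) :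
    f x ≤ μ (Iio x) := by
  refine le_of_tendsto hf ?_
  filter_upwards [hle, self_mem_nhdsWithin] with y hy hyx
  exact hy.trans (measure_mono (Iic_subset_Iio.2 hyx))

section OrderMinimum

variable {α ι κ : Type*}

lemma lt_ciInf_iff_of_finite [ConditionallyCompleteLinearOrder α] [Finite ι] [Nonempty ι]
    {f : ι → α} {a : α} : a < ⨅ i, f i ↔ ∀ i, a < f i := by
  rw [iInf, (finite_range f).lt_csInf_iff (range_nonempty f), forall_mem_range]

lemma measurable_prod_measure_Iio [LinearOrder α] [TopologicalSpace α] [OrderClosedTopology α]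
    [MeasurableSpace α] [BorelSpace α] [Fintype κ] (ν : κ → Measure α) :
    Measurable fun t => ∏ j, ν j (Iio t) :=
  Finset.measurable_prod _ fun _ _ =>
    Monotone.measurable fun _ _ hst => measure_mono (Iio_subset_Iio hst)

lemma measurableSet_forall_forall_lt [LinearOrder α] [TopologicalSpace α] [OrderClosedTopology α]
    [SecondCountableTopology α] [MeasurableSpace α] [BorelSpace α] [Countable ι] [Countable κ] :
    MeasurableSet {p : (ι → α) × (κ → α) | ∀ i j, p.2 j < p.1 i} := by
  simp only [ofPred_forall]
  exact .iInter fun i => .iInter fun j => measurableSet_lt (by fun_prop) (by fun_prop)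

lemma prod_pi_forall_forall_lt [ConditionallyCompleteLinearOrder α] [TopologicalSpace α]
    [OrderTopology α] [SecondCountableTopology α] [MeasurableSpace α] [BorelSpace α]
    [Finite ι] [Nonempty ι] [Fintype κ] (μ : Measure (ι → α)) (ν : κ → Measure α)
    [∀ j, SigmaFinite (ν j)] :
    μ.prod (Measure.pi ν) {p | ∀ i j, p.2 j < p.1 i} =
      ∫⁻ t, ∏ j, ν j (Iio t) ∂μ.map fun x => ⨅ i, x i := by
  rw [Measure.prod_apply measurableSet_forall_forall_lt,
    lintegral_map (measurable_prod_measure_Iio ν) (.iInf measurable_pi_apply)]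
  refine lintegral_congr fun x => ?_
  have section_eq : Prod.mk x ⁻¹' {p : (ι → α) × (κ → α) | ∀ i j, p.2 j < p.1 i} =
      univ.pi fun _ => Iio (⨅ i, x i) := by
    ext y
    simp only [mem_preimage, mem_ofPred_eq, mem_univ_pi, mem_Iio, lt_ciInf_iff_of_finite]
    exact forall_comm
  rw [section_eq, Measure.pi_pi]

end OrderMinimum

section BetaDistribution

variable {a b : ℝ}

lemma support_betaPDF_subset_Ioo : Function.support (betaPDF a b) ⊆ Ioo 0 1 := by
  intro x hx
  by_contra! hx01
  rcases le_or_gt x 0 with hx0 | hx0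
  · exact hx (betaPDF_eq_zero_of_nonpos hx0)
  · exact hx (betaPDF_eq_zero_of_one_le (not_lt.1 fun hx1 => hx01 ⟨hx0, hx1⟩))

lemma measurable_betaPDF : Measurable (betaPDF a b) :=
  (measurable_betaPDFReal a b).ennreal_ofReal

lemma ae_betaMeasure_mem_Ioo : ∀ᵐ x ∂betaMeasure a b, x ∈ Ioo (0 : ℝ) 1 :=
  (ae_withDensity_iff measurable_betaPDF).2 (.of_forall fun _ hx => support_betaPDF_subset_Ioo hx)

lemma betaPDF_mul_rpow {s : ℝ} (ha : 0 < a) (has : 0 < a + s) (hb : 0 < b) (x : ℝ) :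
    betaPDF a b x * ENNReal.ofReal x ^ s =
      ENNReal.ofReal (beta (a + s) b / beta a b) * betaPDF (a + s) b x := by
  by_cases hx : x ∈ Ioo (0 : ℝ) 1
  · have hB := beta_pos ha hb
    have hB' := beta_pos has hb
    have hx1 : 0 < 1 - x := sub_pos.2 hx.2
    have hx0 := hx.1
    rw [betaPDF_of_pos_lt_one hx.1 hx.2, betaPDF_of_pos_lt_one hx.1 hx.2,
      ENNReal.ofReal_rpow_of_pos hx.1, ← ENNReal.ofReal_mul (by positivity),
      ← ENNReal.ofReal_mul (by positivity), add_sub_right_comm, Real.rpow_add hx.1]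
    congr 1
    field_simp
  · simp only [Function.notMem_support.1 fun h => hx (support_betaPDF_subset_Ioo h), zero_mul,
      mul_zero]

lemma lintegral_rpow_betaMeasure {s : ℝ} (ha : 0 < a) (has : 0 < a + s) (hb : 0 < b) :
    ∫⁻ x, ENNReal.ofReal x ^ s ∂betaMeasure a b =
      ENNReal.ofReal (beta (a + s) b / beta a b) := by
  rw [betaMeasure, lintegral_withDensity_eq_lintegral_mul _ measurable_betaPDF (by fun_prop)]
  simp only [Pi.mul_apply, betaPDF_mul_rpow ha has hb]
  rw [lintegral_const_mul _ measurable_betaPDF, lintegral_betaPDF_eq_one has hb, mul_one]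

lemma beta_one_left (hb : 0 < b) : beta 1 b = 1 / b := by
  have := (Real.Gamma_pos_of_pos hb).ne'
  rw [beta, Real.Gamma_one, add_comm, Real.Gamma_add_one hb.ne']
  field_simp

lemma beta_one_add_natCast_div_beta_one {n : ℕ} (m : ℕ) (hn : n ≠ 0) :
    beta (1 + m) n / beta 1 n = (n.factorial : ℝ) * m.factorial / (n + m).factorial := by
  have hn0 : (0 : ℝ) < n := by positivity
  rw [beta_one_left hn0, beta, ← Real.Gamma_nat_eq_factorial n, Real.Gamma_add_one hn0.ne',
    ← Real.Gamma_nat_eq_factorial m, ← Real.Gamma_nat_eq_factorial (n + m), Nat.cast_add,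
    add_comm (1 : ℝ), add_right_comm, add_comm (m : ℝ) n]
  field_simp

lemma intervalIntegrable_one_sub_rpow (hb : 0 < b) (c : ℝ) :
    IntervalIntegrable (fun x => (1 - x) ^ (b - 1)) volume c 1 := by
  have := (intervalIntegral.intervalIntegrable_rpow' (a := 1 - c) (b := 0)
    (by linarith : -1 < b - 1)).comp_sub_left 1
  simpa only [sub_sub_cancel, sub_zero] using this

lemma integral_mul_one_sub_rpow (hb : 0 < b) (c : ℝ) :
    ∫ x in c..1, b * (1 - x) ^ (b - 1) = (1 - c) ^ b := by
  rw [intervalIntegral.integral_const_mul,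
    intervalIntegral.integral_comp_sub_left (fun x => x ^ (b - 1)), sub_self,
    integral_rpow (.inl (by linarith)), sub_add_cancel, Real.zero_rpow hb.ne', sub_zero]
  field_simp

lemma betaMeasure_one_left_Ioo (hb : 0 < b) {c : ℝ} (hc0 : 0 ≤ c) (hc1 : c ≤ 1) :
    betaMeasure 1 b (Ioo c 1) = ENNReal.ofReal ((1 - c) ^ b) := by
  have betaPDF_eq_of_mem (x : ℝ) (hx : x ∈ Ioo c 1) :
      betaPDF 1 b x = ENNReal.ofReal (b * (1 - x) ^ (b - 1)) := by
    rw [betaPDF_of_pos_lt_one (hc0.trans_lt hx.1) hx.2, beta_one_left hb, sub_self, Real.rpow_zero,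
      one_div_one_div, mul_one]
  have density_nonneg : ∀ x ∈ Ioo c 1, 0 ≤ b * (1 - x) ^ (b - 1) := fun x hx =>
    mul_nonneg hb.le (Real.rpow_nonneg (sub_nonneg.2 hx.2.le) _)
  have density_integrable : IntegrableOn (fun x => b * (1 - x) ^ (b - 1)) (Ioo c 1) :=
    (intervalIntegrable_iff_integrableOn_Ioo_of_le hc1).1
      ((intervalIntegrable_one_sub_rpow hb c).const_mul b)
  rw [betaMeasure, withDensity_apply _ measurableSet_Ioo,
    setLIntegral_congr_fun measurableSet_Ioo betaPDF_eq_of_mem,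
    ← ofReal_integral_eq_lintegral_ofReal density_integrable
      (ae_restrict_of_forall_mem measurableSet_Ioo density_nonneg),
    ← integral_Ioc_eq_integral_Ioo, ← intervalIntegral.integral_of_le hc1,
    integral_mul_one_sub_rpow hb]

lemma betaMeasure_one_left_Ici (hb : 0 < b) (t : ℝ) :
    betaMeasure 1 b (Ici t) = ENNReal.ofReal (1 - max t 0) ^ b := by
  have eq_Ioo : betaMeasure 1 b (Ici t) = betaMeasure 1 b (Ioo (max t 0) 1) := by
    refine measure_congr ?_
    filter_upwards [ae_betaMeasure_mem_Ioo,
      (withDensity_absolutelyContinuous _ _).ae_eq (Ioi_ae_eq_Ici (a := t))] with x hx hxt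
    rw [← hxt]
    exact propext ⟨fun htx => ⟨max_lt htx hx.1, hx.2⟩, fun hx => (le_max_left _ _).trans_lt hx.1⟩
  rw [eq_Ioo]
  rcases le_total (max t 0) 1 with hc | hc
  · rw [betaMeasure_one_left_Ioo hb (le_max_right _ _) hc,
      ENNReal.ofReal_rpow_of_nonneg (sub_nonneg.2 hc) hb.le]
  · rw [Ioo_eq_empty hc.not_gt, measure_empty, ENNReal.ofReal_of_nonpos (sub_nonpos.2 hc),
      ENNReal.zero_rpow_of_pos hb]

end BetaDistribution

lemma volume_restrict_Icc_Ici (a b t : ℝ) :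
    volume.restrict (Icc a b) (Ici t) = ENNReal.ofReal (b - max t a) := by
  rw [Measure.restrict_apply measurableSet_Ici, ← Ici_inter_Iic, ← inter_assoc, Ici_inter_Ici,
    Ici_inter_Iic, Real.volume_Icc]

lemma map_iInf_pi_uniform {ι : Type*} [Fintype ι] [Nonempty ι] :
    (Measure.pi fun _ : ι => volume.restrict (Icc (0 : ℝ) 1)).map (fun x => ⨅ i, x i) =
      betaMeasure 1 (Fintype.card ι) := by
  have hcard : (0 : ℝ) < Fintype.card ι := Nat.cast_pos.2 Fintype.card_pos
  refine Measure.ext_of_Ici _ _ fun t => ?_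
  have preimage_eq : (fun x : ι → ℝ => ⨅ i, x i) ⁻¹' Ici t = univ.pi fun _ => Ici t := by
    ext x
    simp only [mem_preimage, mem_Ici, mem_univ_pi, le_ciInf_iff (finite_range x).bddBelow]
  rw [Measure.map_apply (.iInf measurable_pi_apply) measurableSet_Ici, preimage_eq,
    Measure.pi_pi, betaMeasure_one_left_Ici hcard, ENNReal.rpow_natCast]
  simp only [volume_restrict_Icc_Ici, Finset.prod_const, Finset.card_univ]

theorem ks_one_sided_unbiased_smallest_level_general {ι κ : Type*} [Fintype ι] [Nonempty ι]
    [Fintype κ] (ν : κ → Measure ℝ) [∀ j, SigmaFinite (ν j)]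
    (hν : ∀ j, ∀ x ∈ Ioo (0 : ℝ) 1, ENNReal.ofReal x ≤ ν j (Iic x)) :
    ENNReal.ofReal (((Fintype.card ι).factorial : ℝ) * (Fintype.card κ).factorial /
        (Fintype.card ι + Fintype.card κ).factorial) ≤
      ((Measure.pi fun _ : ι => volume.restrict (Icc (0 : ℝ) 1)).prod (Measure.pi ν))
        {p | ∀ i j, p.2 j < p.1 i} := by
  have hcard : (0 : ℝ) < Fintype.card ι := Nat.cast_pos.2 Fintype.card_pos
  rw [prod_pi_forall_forall_lt, map_iInf_pi_uniform,
    ← beta_one_add_natCast_div_beta_one _ Fintype.card_ne_zero,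
    ← lintegral_rpow_betaMeasure one_pos (by positivity) hcard]
  refine lintegral_mono_ae (ae_betaMeasure_mem_Ioo.mono fun t ht => ?_)
  have le_Iio (j : κ) : ENNReal.ofReal t ≤ ν j (Iio t) := by
    refine le_measure_Iio_of_eventually_le_measure_Iic
      ENNReal.continuous_ofReal.continuousWithinAt ?_
    filter_upwards [Ioo_mem_nhdsLT ht.1] with s hs
    exact hν j s ⟨hs.1, hs.2.trans ht.2⟩
  calc ENNReal.ofReal t ^ (Fintype.card κ : ℝ) = ∏ _j : κ, ENNReal.ofReal t := by
        rw [ENNReal.rpow_natCast, Finset.prod_const, Finset.card_univ]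
    _ ≤ ∏ j, ν j (Iio t) := Finset.prod_le_prod' fun j _ => le_Iio j

/-- If `X₁,…,Xₙ` are i.i.d. uniform on `[0,1]` and `Y₁,…,Yₘ` are i.i.d. with law `ν` having
continuous cdf `G` satisfying `G x ≥ x` on `[0,1]`, independent of the `X`'s, then
`P(max Y < min X) ≥ n!·m!/(n+m)!`. -/
theorem ks_one_sided_unbiased_smallest_level (n m : ℕ) (hn : 1 ≤ n) (hm : 1 ≤ m)
    (ν : Measure ℝ) [IsProbabilityMeasure ν]
    (G : ℝ → ℝ) (hG : ∀ t : ℝ, G t = (ν (Set.Iic t)).toReal) (hGcont : Continuous G)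
    (hGx : ∀ x ∈ Set.Icc (0:ℝ) 1, x ≤ G x) :
    (((Measure.pi fun _ : Fin n => volume.restrict (Set.Icc (0:ℝ) 1)).prod
        (Measure.pi fun _ : Fin m => ν))
      {p : (Fin n → ℝ) × (Fin m → ℝ) | ∀ (i : Fin n) (j : Fin m), p.2 j < p.1 i}).toReal ≥
    (n.factorial : ℝ) * m.factorial / (n + m).factorial := by
  have : Nonempty (Fin n) := ⟨⟨0, hn⟩⟩
  have hν (x : ℝ) (hx : x ∈ Ioo (0 : ℝ) 1) : ENNReal.ofReal x ≤ ν (Iic x) :=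
    ENNReal.ofReal_le_of_le_toReal (hG x ▸ hGx x (Ioo_subset_Icc_self hx))
  refine (ENNReal.ofReal_le_iff_le_toReal (measure_ne_top _ _)).1 ?_
  simpa only [Fintype.card_fin] using
    ks_one_sided_unbiased_smallest_level_general (ι := Fin n) (κ := Fin m) _ fun _ => hν
end

section
/- Let n, m ≥ 2 be integers with n ≠ m, define G* : (0,1) → (0,1) by G*(x) = t/(1+t) with t = (x/(1−x))^{(n−1)/(m−1)}, and let ν be the Borel probability measure on [0,1] whose cumulative distribution function restricted to (0,1) is G*. If X₁,…,Xₙ are i.i.d. uniform on [0,1] and Y₁,…,Yₘ are i.i.d. with law ν, independent of the X's, then P(max(Y₁,…,Yₘ) < min(X₁,…,Xₙ) or max(X₁,…,Xₙ) < min(Y₁,…,Yₘ)) < 2·n!·m!/(n+m)!. -/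
open MeasureTheory

/-!
Condition on the smallest (resp. largest) `X`-observation `x`: with `G` the distribution function
of `ν`, a union bound over its index gives
`P ≤ n ∫₀¹ ((1 - x)^(n-1) G(x)^m + x^(n-1) (1 - G(x))^m) dx`.
For fixed `x` the integrand is a strictly convex function of the number `G(x)` whose critical
point is `G*(x)`, so replacing `G*(x)` by `x` does not decrease it, and increases it strictly
unless `G*(x) = x`, that is, as `n ≠ m`, unless `x ∈ {0, 1/2, 1}`. The replacement turns the bound
into a sum of two Beta integrals with value `2 n! m! / (n + m)!`.
-/

section Separation

/-- The event that one of two samples lies entirely to the left of the other, i.e. that their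
two-sample Kolmogorov–Smirnov statistic equals `1`. -/
def separatedSamples (ι κ α : Type*) [LT α] : Set ((ι → α) × (κ → α)) :=
  {p | (∀ i j, p.2 j < p.1 i) ∨ ∀ i j, p.1 i < p.2 j}

lemma measure_pi_prod_pi_forall_mem {α β κ : Type*} [MeasurableSpace α] [MeasurableSpace β]
    [Fintype κ] {N : ℕ} (ρ : Measure α) (ν : Measure β) [SigmaFinite ρ] [SigmaFinite ν]
    (k : Fin (N + 1)) {S : Set (α × α)} {T : Set (α × β)}
    (hS : MeasurableSet S) (hT : MeasurableSet T) :
    ((Measure.pi fun _ : Fin (N + 1) => ρ).prod (Measure.pi fun _ : κ => ν))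
      {p | (∀ i, (p.1 k, p.1 (k.succAbove i)) ∈ S) ∧ ∀ j, (p.1 k, p.2 j) ∈ T} =
    ∫⁻ a, ρ (Prod.mk a ⁻¹' S) ^ N * ν (Prod.mk a ⁻¹' T) ^ Fintype.card κ ∂ρ := by
  let E : Set (α × (Fin N → α) × (κ → β)) :=
    {q | (∀ i, (q.1, q.2.1 i) ∈ S) ∧ ∀ j, (q.1, q.2.2 j) ∈ T}
  have hE : MeasurableSet E := by
    simp only [E, Set.ofPred_and, Set.ofPred_forall]
    exact (MeasurableSet.iInter fun i => hS.preimage (by fun_prop)).inter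
      (MeasurableSet.iInter fun j => hT.preimage (by fun_prop))
  have hslice (a : α) : Prod.mk a ⁻¹' E =
      (Set.univ.pi fun _ => Prod.mk a ⁻¹' S) ×ˢ (Set.univ.pi fun _ => Prod.mk a ⁻¹' T) := by
    ext q
    simp [E]
  have isolate_k := (measurePreserving_prodAssoc ρ (Measure.pi fun _ : Fin N => ρ)
    (Measure.pi fun _ : κ => ν)).comp
      ((measurePreserving_piFinSuccAbove (fun _ : Fin (N + 1) => ρ) k).prod (.id _))
  refine (isolate_k.measure_preimage hE.nullMeasurableSet).trans ?_
  simp [Measure.prod_apply hE, hslice, Measure.prod_prod, Measure.pi_pi]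

lemma measure_separatedSamples_le {α κ : Type*} [LinearOrder α] [TopologicalSpace α]
    [OrderClosedTopology α] [SecondCountableTopology α] [MeasurableSpace α] [OpensMeasurableSpace α]
    [Fintype κ] (N : ℕ) (ρ ν : Measure α) [SigmaFinite ρ] [SigmaFinite ν] :
    ((Measure.pi fun _ : Fin (N + 1) => ρ).prod (Measure.pi fun _ : κ => ν))
      (separatedSamples (Fin (N + 1)) κ α) ≤
    (N + 1) * ∫⁻ a, (ρ (Set.Ici a) ^ N * ν (Set.Iio a) ^ Fintype.card κ +
      ρ (Set.Iic a) ^ N * ν (Set.Ioi a) ^ Fintype.card κ) ∂ρ := by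
  set P := (Measure.pi fun _ : Fin (N + 1) => ρ).prod (Measure.pi fun _ : κ => ν)
  let minAt (k : Fin (N + 1)) : Set ((Fin (N + 1) → α) × (κ → α)) :=
    {p | (∀ i, p.1 k ≤ p.1 (k.succAbove i)) ∧ ∀ j, p.2 j < p.1 k}
  let maxAt (k : Fin (N + 1)) : Set ((Fin (N + 1) → α) × (κ → α)) :=
    {p | (∀ i, p.1 (k.succAbove i) ≤ p.1 k) ∧ ∀ j, p.1 k < p.2 j}
  have cover : separatedSamples (Fin (N + 1)) κ α ⊆ ⋃ k, minAt k ∪ maxAt k := by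
    rintro p (hp | hp)
    · obtain ⟨k, hk⟩ := Finite.exists_min p.1
      exact Set.mem_iUnion.2 ⟨k, .inl ⟨fun i => hk _, hp k⟩⟩
    · obtain ⟨k, hk⟩ := Finite.exists_max p.1
      exact Set.mem_iUnion.2 ⟨k, .inr ⟨fun i => hk _, hp k⟩⟩
  have hle : MeasurableSet {q : α × α | q.1 ≤ q.2} := measurableSet_le'
  have hlt : MeasurableSet {q : α × α | q.1 < q.2} := measurableSet_lt'
  have hge : MeasurableSet {q : α × α | q.2 ≤ q.1} := measurable_swap hle
  have hgt : MeasurableSet {q : α × α | q.2 < q.1} := measurable_swap hlt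
  have measure_minAt (k) : P (minAt k) =
      ∫⁻ a, ρ (Set.Ici a) ^ N * ν (Set.Iio a) ^ Fintype.card κ ∂ρ :=
    measure_pi_prod_pi_forall_mem ρ ν k hle hgt
  have measure_maxAt (k) : P (maxAt k) =
      ∫⁻ a, ρ (Set.Iic a) ^ N * ν (Set.Ioi a) ^ Fintype.card κ ∂ρ :=
    measure_pi_prod_pi_forall_mem ρ ν k hge hlt
  have measurable_min :
      Measurable fun a => ρ (Set.Ici a) ^ N * ν (Set.Iio a) ^ Fintype.card κ :=
    ((measurable_measure_prodMk_left hle).pow_const _).mul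
      ((measurable_measure_prodMk_left hgt).pow_const _)
  calc P (separatedSamples (Fin (N + 1)) κ α)
      ≤ ∑ k, P (minAt k ∪ maxAt k) := (measure_mono cover).trans (measure_iUnion_fintype_le _ _)
    _ ≤ ∑ k, (P (minAt k) + P (maxAt k)) := Finset.sum_le_sum fun k _ => measure_union_le _ _
    _ = _ := by simp [measure_minAt, measure_maxAt, lintegral_add_left measurable_min, mul_add]

end Separation

section UniformSample

/-- The density at `x`, up to the factor `N + 1`, of the event that `N + 1` uniform observations on
`[0, 1]` have `x` as their minimum (resp. maximum) and that `m` independent observations, each with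
probability `g` of falling below `x`, all fall below (resp. above) `x`. -/
def separationDensity (N m : ℕ) (x g : ℝ) : ℝ :=
  (1 - x) ^ N * g ^ m + x ^ N * (1 - g) ^ m

lemma separationDensity_nonneg (N m : ℕ) {x g : ℝ} (hx : x ∈ Set.Icc 0 1)
    (hg : g ∈ Set.Icc 0 1) : 0 ≤ separationDensity N m x g := by
  obtain ⟨hx₀, hx₁⟩ := hx
  obtain ⟨hg₀, hg₁⟩ := hg
  rw [← sub_nonneg] at hx₁ hg₁
  unfold separationDensity
  positivity

lemma separationDensity_le_two (N m : ℕ) {x g : ℝ} (hx : x ∈ Set.Icc 0 1)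
    (hg : g ∈ Set.Icc 0 1) : separationDensity N m x g ≤ 2 := by
  obtain ⟨hx', hx₁'⟩ := Set.Icc.one_sub_mem hx
  obtain ⟨hg', hg₁'⟩ := Set.Icc.one_sub_mem hg
  have hbelow : (1 - x) ^ N * g ^ m ≤ 1 :=
    mul_le_one₀ (pow_le_one₀ hx' hx₁') (pow_nonneg hg.1 m) (pow_le_one₀ hg.1 hg.2)
  have habove : x ^ N * (1 - g) ^ m ≤ 1 :=
    mul_le_one₀ (pow_le_one₀ hx.1 hx.2) (pow_nonneg hg' m) (pow_le_one₀ hg' hg₁')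
  unfold separationDensity
  linarith

lemma volume_restrict_Icc_Ici_s7 {a b x : ℝ} (hx : a ≤ x) :
    volume.restrict (Set.Icc a b) (Set.Ici x) = ENNReal.ofReal (b - x) := by
  have : Set.Ici x ∩ Set.Icc a b = Set.Icc x b := by
    grind
  rw [Measure.restrict_apply measurableSet_Ici, this, Real.volume_Icc]

lemma volume_restrict_Icc_Iic {a b x : ℝ} (hx : x ≤ b) :
    volume.restrict (Set.Icc a b) (Set.Iic x) = ENNReal.ofReal (x - a) := by
  have : Set.Iic x ∩ Set.Icc a b = Set.Icc a x := by
    grind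
  rw [Measure.restrict_apply measurableSet_Iic, this, Real.volume_Icc]

lemma conditional_measure_le_separationDensity (N m : ℕ) (ν : Measure ℝ) [IsProbabilityMeasure ν]
    {x : ℝ} (hx : x ∈ Set.Icc 0 1) :
    volume.restrict (Set.Icc 0 1) (Set.Ici x) ^ N * ν (Set.Iio x) ^ m +
      volume.restrict (Set.Icc 0 1) (Set.Iic x) ^ N * ν (Set.Ioi x) ^ m ≤
    ENNReal.ofReal (separationDensity N m x (ν.real (Set.Iic x))) := by
  have hIoi : ν (Set.Ioi x) = ENNReal.ofReal (1 - ν.real (Set.Iic x)) := by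
    rw [← probReal_compl_eq_one_sub measurableSet_Iic, Set.compl_Iic, ofReal_measureReal]
  have hIio : ν (Set.Iio x) ≤ ENNReal.ofReal (ν.real (Set.Iic x)) := by
    rw [ofReal_measureReal]
    exact measure_mono Set.Iio_subset_Iic_self
  have hx₀ := hx.1
  have hx₁ := sub_nonneg.2 hx.2
  have hg₁ := sub_nonneg.2 (measureReal_le_one (μ := ν) (s := Set.Iic x))
  rw [separationDensity, ENNReal.ofReal_add (by positivity) (by positivity),
    ENNReal.ofReal_mul (by positivity), ENNReal.ofReal_mul (by positivity),
    ENNReal.ofReal_pow hx₁, ENNReal.ofReal_pow measureReal_nonneg, ENNReal.ofReal_pow hx₀,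
    ENNReal.ofReal_pow hg₁, volume_restrict_Icc_Ici_s7 hx.1, volume_restrict_Icc_Iic hx.2, hIoi,
    sub_zero]
  gcongr

lemma measureReal_separatedSamples_le (N m : ℕ) (ν : Measure ℝ) [IsProbabilityMeasure ν] :
    ((Measure.pi fun _ : Fin (N + 1) => volume.restrict (Set.Icc (0 : ℝ) 1)).prod
      (Measure.pi fun _ : Fin m => ν)).real (separatedSamples (Fin (N + 1)) (Fin m) ℝ) ≤
    (N + 1) * ∫ x in (0 : ℝ)..1, separationDensity N m x (ν.real (Set.Iic x)) := by
  have hG (x : ℝ) : ν.real (Set.Iic x) ∈ Set.Icc 0 1 := ⟨measureReal_nonneg, measureReal_le_one⟩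
  have nonneg : ∀ᵐ x ∂volume.restrict (Set.Icc (0 : ℝ) 1),
      0 ≤ separationDensity N m x (ν.real (Set.Iic x)) :=
    ae_restrict_of_forall_mem measurableSet_Icc fun x hx => separationDensity_nonneg N m hx (hG x)
  have integrable : IntegrableOn (fun x => separationDensity N m x (ν.real (Set.Iic x)))
      (Set.Icc 0 1) := by
    refine .of_bound (by simp) (Measurable.aestronglyMeasurable ?_) 2
      (ae_restrict_of_forall_mem measurableSet_Icc fun x hx => ?_)
    · have hmeas : Measurable fun x => ν.real (Set.Iic x) :=
        Monotone.measurable fun _ _ hxy => measureReal_mono (Set.Iic_subset_Iic.2 hxy)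
      unfold separationDensity
      fun_prop
    · rw [Real.norm_of_nonneg (separationDensity_nonneg N m hx (hG x))]
      exact separationDensity_le_two N m hx (hG x)
  rw [intervalIntegral.integral_of_le zero_le_one, ← integral_Icc_eq_integral_Ioc]
  refine ENNReal.toReal_le_of_le_ofReal
    (mul_nonneg (by positivity) (integral_nonneg_of_ae nonneg)) ?_
  rw [ENNReal.ofReal_mul (by positivity), ofReal_integral_eq_lintegral_ofReal integrable nonneg,
    ← Nat.cast_succ, ENNReal.ofReal_natCast, Nat.cast_succ]
  refine (measure_separatedSamples_le N _ ν).trans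
    (mul_le_mul_right (setLIntegral_mono_ae' measurableSet_Icc ?_) _)
  rw [Fintype.card_fin]
  exact .of_forall fun x hx => conditional_measure_le_separationDensity N m ν hx

end UniformSample

section BetaIntegral

lemma integral_pow_mul_one_sub_pow (a b : ℕ) :
    ∫ x in (0 : ℝ)..1, x ^ a * (1 - x) ^ b =
      (a.factorial : ℝ) * b.factorial / (a + b + 1).factorial := by
  have hbeta := Complex.betaIntegral_eq_Gamma_mul_div (a + 1) (b + 1)
    (by simpa using Nat.cast_add_one_pos (α := ℝ) a)
    (by simpa using Nat.cast_add_one_pos (α := ℝ) b)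
  rw [show (a + 1 + (b + 1) : ℂ) = (a + b + 1 : ℕ) + 1 by push_cast; ring] at hbeta
  simp only [Complex.Gamma_nat_eq_factorial, Complex.betaIntegral, add_sub_cancel_right,
    Complex.cpow_natCast] at hbeta
  apply Complex.ofReal_injective
  rw [← intervalIntegral.integral_ofReal]
  push_cast
  exact hbeta

lemma integral_separationDensity_self (N m : ℕ) :
    ∫ x in (0 : ℝ)..1, separationDensity N m x x =
      2 * (N.factorial * m.factorial / (N + m + 1).factorial) := by
  simp only [separationDensity, mul_comm ((1 - _ : ℝ) ^ N)]
  rw [intervalIntegral.integral_add (Continuous.intervalIntegrable (by fun_prop) _ _)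
    (Continuous.intervalIntegrable (by fun_prop) _ _), integral_pow_mul_one_sub_pow,
    integral_pow_mul_one_sub_pow, add_comm m N]
  ring

end BetaIntegral

section CriticalPoint

lemma add_mul_sub_lt_of_strictConvexOn {S : Set ℝ} {f : ℝ → ℝ} {f' g y : ℝ}
    (hf : StrictConvexOn ℝ S f) (hf' : HasDerivAt f f' g) (hg : g ∈ S) (hy : y ∈ S)
    (hne : y ≠ g) : f g + f' * (y - g) < f y := by
  rcases hne.lt_or_gt with hlt | hgt
  · have h := hf.slope_lt_of_hasDerivAt hy hg hlt hf'
    rw [slope_def_field, div_lt_iff₀ (sub_pos.2 hlt)] at h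
    linarith
  · have h := hf.lt_slope_of_hasDerivAt hg hy hgt hf'
    rw [slope_def_field, lt_div_iff₀ (sub_pos.2 hgt)] at h
    linarith

lemma pow_add_mul_sub_lt_pow {m : ℕ} (hm : 2 ≤ m) {g y : ℝ} (hg : 0 ≤ g) (hy : 0 ≤ y)
    (hne : y ≠ g) : g ^ m + m * g ^ (m - 1) * (y - g) < y ^ m :=
  add_mul_sub_lt_of_strictConvexOn (strictConvexOn_pow hm) (hasDerivAt_pow m g) hg hy hne

/-- `hcrit` says that the derivative of `separationDensity N (M + 1) x` vanishes at `g`. -/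
lemma separationDensity_lt_of_critical {N M : ℕ} (hM : M ≠ 0) {x g y : ℝ}
    (hx : x ∈ Set.Ioc 0 1) (hg : g ∈ Set.Icc 0 1) (hy : y ∈ Set.Icc 0 1)
    (hcrit : (1 - x) ^ N * g ^ M = x ^ N * (1 - g) ^ M) (hne : y ≠ g) :
    separationDensity N (M + 1) x g < separationDensity N (M + 1) x y := by
  have hm : 2 ≤ M + 1 := by lia
  have hbelow := mul_le_mul_of_nonneg_left (pow_add_mul_sub_lt_pow hm hg.1 hy.1 hne).le
    (pow_nonneg (sub_nonneg.2 hx.2) N)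
  have habove := mul_lt_mul_of_pos_left
    (pow_add_mul_sub_lt_pow hm (sub_nonneg.2 hg.2) (sub_nonneg.2 hy.2)
      (sub_right_injective.ne hne)) (pow_pos hx.1 N)
  rw [Nat.add_sub_cancel] at hbelow habove
  unfold separationDensity
  linear_combination hbelow + habove - ((M + 1 : ℕ) : ℝ) * (y - g) * hcrit

end CriticalPoint

section SCurve

/-- The S-curve `t / (1 + t)`, `t = (x / (1 - x)) ^ r`, of the paper, with `(1 - x) ^ r` cleared so
that for `0 ≤ r` it is continuous on all of `[0, 1]`, without the junk value `1 / 0` at `x = 1`. -/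
noncomputable def sCurve (r x : ℝ) : ℝ :=
  x ^ r / (x ^ r + (1 - x) ^ r)

variable {r x : ℝ}

lemma sCurve_eq_div_one_add (hx : x ∈ Set.Ioo 0 1) :
    sCurve r x = (x / (1 - x)) ^ r / (1 + (x / (1 - x)) ^ r) := by
  have hx₁ : 0 < 1 - x := sub_pos.2 hx.2
  have := Real.rpow_pos_of_pos hx₁ r
  rw [sCurve, Real.div_rpow hx.1.le hx₁.le]
  field_simp
  ring

lemma rpow_add_one_sub_rpow_pos (hx : x ∈ Set.Icc 0 1) : 0 < x ^ r + (1 - x) ^ r := by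
  rcases hx.1.eq_or_lt with rfl | hx₀
  · simpa using add_pos_of_nonneg_of_pos (Real.rpow_nonneg le_rfl r) one_pos
  · exact add_pos_of_pos_of_nonneg (Real.rpow_pos_of_pos hx₀ r)
      (Real.rpow_nonneg (sub_nonneg.2 hx.2) r)

lemma one_sub_sCurve (hx : x ∈ Set.Icc 0 1) : 1 - sCurve r x = sCurve r (1 - x) := by
  have hpos := rpow_add_one_sub_rpow_pos (r := r) hx
  rw [sCurve, sCurve, sub_sub_cancel, add_comm ((1 - x) ^ r)]
  field_simp
  ring

lemma sCurve_nonneg (hx : x ∈ Set.Icc 0 1) : 0 ≤ sCurve r x :=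
  div_nonneg (Real.rpow_nonneg hx.1 r) (rpow_add_one_sub_rpow_pos hx).le

lemma sCurve_mem_Icc (hx : x ∈ Set.Icc 0 1) : sCurve r x ∈ Set.Icc 0 1 := by
  refine ⟨sCurve_nonneg hx, sub_nonneg.1 ?_⟩
  rw [one_sub_sCurve hx]
  exact sCurve_nonneg (Set.Icc.one_sub_mem hx)

lemma continuousOn_sCurve (hr : 0 ≤ r) : ContinuousOn (sCurve r) (Set.Icc 0 1) :=
  have hpow := Real.continuous_rpow_const hr
  hpow.continuousOn.div (hpow.add (hpow.comp (continuous_const.sub continuous_id))).continuousOn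
    fun _ hx => (rpow_add_one_sub_rpow_pos hx).ne'

lemma sCurve_ne_self (hr : r ≠ 1) (hx : x ∈ Set.Ioo 0 1) (hhalf : x ≠ 1 / 2) :
    sCurve r x ≠ x := by
  have hx₁ : 0 < 1 - x := sub_pos.2 hx.2
  have odds_pos : 0 < x / (1 - x) := div_pos hx.1 hx₁
  have odds_ne_one : x / (1 - x) ≠ 1 := by
    rw [Ne, div_eq_one_iff_eq hx₁.ne']
    contrapose hhalf
    linarith
  have rpow_odds_ne : (x / (1 - x)) ^ r ≠ x / (1 - x) := fun h =>
    hr ((Real.rpow_right_inj odds_pos odds_ne_one).1 (h.trans (Real.rpow_one _).symm))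
  rw [sCurve_eq_div_one_add hx]
  contrapose rpow_odds_ne
  rw [div_eq_iff (add_pos one_pos (Real.rpow_pos_of_pos odds_pos r)).ne'] at rpow_odds_ne
  rw [eq_div_iff hx₁.ne']
  linarith

lemma sCurve_critical {M : ℕ} (hM : M ≠ 0) (N : ℕ) (hx : x ∈ Set.Icc 0 1) :
    (1 - x) ^ N * sCurve (N / M) x ^ M = x ^ N * (1 - sCurve (N / M) x) ^ M := by
  have rpow_div_pow {y : ℝ} (hy : 0 ≤ y) : (y ^ (N / M : ℝ)) ^ M = y ^ N := by
    rw [← Real.rpow_mul_natCast hy, div_mul_cancel₀ _ (Nat.cast_ne_zero.2 hM), Real.rpow_natCast]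
  rw [one_sub_sCurve hx, sCurve, sCurve, sub_sub_cancel, add_comm ((1 - x) ^ _), div_pow, div_pow,
    rpow_div_pow hx.1, rpow_div_pow (sub_nonneg.2 hx.2)]
  ring

lemma integral_separationDensity_sCurve_lt {N M : ℕ} (hM : M ≠ 0) (hNM : N ≠ M) :
    ∫ x in (0 : ℝ)..1, separationDensity N (M + 1) x (sCurve (N / M) x) <
      ∫ x in (0 : ℝ)..1, separationDensity N (M + 1) x x := by
  have strict {x : ℝ} (hx : x ∈ Set.Ioc 0 1) (hne : x ≠ sCurve (N / M) x) :
      separationDensity N (M + 1) x (sCurve (N / M) x) < separationDensity N (M + 1) x x :=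
    have hx' := Set.Ioc_subset_Icc_self hx
    separationDensity_lt_of_critical hM hx (sCurve_mem_Icc hx') hx' (sCurve_critical hM N hx') hne
  have hr : (N / M : ℝ) ≠ 1 := by
    rw [Ne, div_eq_one_iff_eq (Nat.cast_ne_zero.2 hM)]
    exact_mod_cast hNM
  have hcont := continuousOn_sCurve (r := N / M) (by positivity)
  refine intervalIntegral.integral_lt_integral_of_continuousOn_of_le_of_exists_lt one_pos
    (by unfold separationDensity; fun_prop) (by unfold separationDensity; fun_prop)
    (fun x hx => ?_) ⟨1 / 3, by norm_num, strict (by norm_num)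
      (sCurve_ne_self hr (by norm_num) (by norm_num)).symm⟩
  by_cases hfix : x = sCurve (N / M) x
  · rw [← hfix]
  · exact (strict hx hfix).le

end SCurve

/-- Theorem 2 of the paper in probabilistic form: for `n ≠ m`, if the second sample has the
S-curve distribution `G*`, then the probability that the two-sample Kolmogorov–Smirnov
statistic equals 1 is strictly less than its null value `2·n!·m!/(n+m)!`. -/
theorem ks_biased_smallest_level_prob (n m : ℕ) (hn : 2 ≤ n) (hm : 2 ≤ m) (hnm : n ≠ m)
    (ν : Measure ℝ) [IsProbabilityMeasure ν] (hν : ν (Set.Icc (0:ℝ) 1) = 1)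
    (hcdf : ∀ x ∈ Set.Ioo (0:ℝ) 1, (ν (Set.Iic x)).toReal =
      (x / (1 - x)) ^ (((n : ℝ) - 1) / ((m : ℝ) - 1)) /
        (1 + (x / (1 - x)) ^ (((n : ℝ) - 1) / ((m : ℝ) - 1)))) :
    (((Measure.pi fun _ : Fin n => volume.restrict (Set.Icc (0:ℝ) 1)).prod
        (Measure.pi fun _ : Fin m => ν))
      {p : (Fin n → ℝ) × (Fin m → ℝ) |
        (∀ (i : Fin n) (j : Fin m), p.2 j < p.1 i) ∨
        (∀ (i : Fin n) (j : Fin m), p.1 i < p.2 j)}).toReal <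
    2 * (n.factorial : ℝ) * m.factorial / (n + m).factorial := by
  obtain ⟨N, rfl⟩ := Nat.exists_eq_add_of_le' (one_le_two.trans hn)
  obtain ⟨M, rfl⟩ := Nat.exists_eq_add_of_le' (one_le_two.trans hm)
  have hG : ∀ x ∈ Set.Ioo (0 : ℝ) 1, ν.real (Set.Iic x) = sCurve (N / M) x := fun x hx => by
    simpa [sCurve_eq_div_one_add hx, Measure.real] using hcdf x hx
  calc _ ≤ (N + 1) * ∫ x in (0 : ℝ)..1, separationDensity N (M + 1) x (ν.real (Set.Iic x)) :=
        measureReal_separatedSamples_le N (M + 1) ν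
    _ = (N + 1) * ∫ x in (0 : ℝ)..1, separationDensity N (M + 1) x (sCurve (N / M) x) := by
        rw [intervalIntegral.integral_congr_Ioo_of_le zero_le_one fun x hx => ?_]
        exact congrArg (separationDensity N (M + 1) x) (hG x hx)
    _ < (N + 1) * ∫ x in (0 : ℝ)..1, separationDensity N (M + 1) x x := by
        gcongr
        exact integral_separationDensity_sCurve_lt (by lia) (by lia)
    _ = _ := by
        rw [integral_separationDensity_self, show N + 1 + (M + 1) = N + (M + 1) + 1 by lia,
          Nat.factorial_succ N]
        push_cast
        ring
end

section
/- Let n ≥ 4 and m ≥ 2 be integers and fix x ∈ (0,1). The function g(y) = x^{n−2}(1−x)(1−y)^m + x(1−x)^{n−2} y^m on [0,1] attains its minimum at a unique point y* ∈ (0,1), namely y* = s/(1+s) where s = (x/(1−x))^{(n−3)/(m−1)}; equivalently, y* is the unique y ∈ (0,1) satisfying (y/(1−y))^{m−1} = (x/(1−x))^{n−3}. -/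
/-!
The function `g(y) = a (1 - y)^m + b y^m` is strictly convex on `[0, 1]`, so a critical point is its
unique minimiser. The critical point equation `b y^(m-1) = a (1 - y)^(m-1)` only involves the odds
`y / (1 - y)`: their `(m-1)`-st power is `a / b`, which is `(x / (1 - x))^(n-3)` for the weights of
the theorem. The point of odds `s` is `s / (1 + s)`, so the odds of the minimiser are the
`(m-1)`-st root of `(x / (1 - x))^(n-3)`.
-/

open Set

lemma strictConvexOn_comp_affineMap {𝕜 E F β : Type*} [Ring 𝕜] [PartialOrder 𝕜]
    [AddCommGroup E] [AddCommGroup F] [AddCommMonoid β] [PartialOrder β]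
    [Module 𝕜 E] [Module 𝕜 F] [SMul 𝕜 β] {f : F → β} {s : Set F}
    (hf : StrictConvexOn 𝕜 s f) (g : E →ᵃ[𝕜] F) (hg : Function.Injective g) :
    StrictConvexOn 𝕜 (g ⁻¹' s) (f ∘ g) := by
  refine ⟨hf.1.affine_preimage g, fun y hy z hz hne a b ha hb hab => ?_⟩
  rw [Function.comp_apply, Convex.combo_affine_apply hab]
  exact hf.2 hy hz (hg.ne hne) ha hb hab

lemma strictConvexOn_const_mul {𝕜 E : Type*} [CommSemiring 𝕜] [PartialOrder 𝕜]
    [PosMulStrictMono 𝕜] [AddCommMonoid E] [SMul 𝕜 E] {f : E → 𝕜} {s : Set E} {c : 𝕜} (hc : 0 < c)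
    (hf : StrictConvexOn 𝕜 s f) : StrictConvexOn 𝕜 s fun y => c * f y := by
  refine ⟨hf.1, fun y hy z hz hne p q hp hq hpq => ?_⟩
  calc c * f (p • y + q • z) < c * (p • f y + q • f z) :=
        mul_lt_mul_of_pos_left (hf.2 hy hz hne hp hq hpq) hc
    _ = p • (c * f y) + q • (c * f z) := by simp only [smul_eq_mul]; ring

lemma lt_of_strictConvexOn_of_hasDerivAt_zero {f : ℝ → ℝ} {S : Set ℝ} {x y : ℝ}
    (hf : StrictConvexOn ℝ S f) (hx : x ∈ S) (hf' : HasDerivAt f 0 x) (hy : y ∈ S) (hne : y ≠ x) :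
    f x < f y := by
  rcases hne.lt_or_gt with hyx | hxy
  · have hslope : slope f y x < 0 := hf.slope_lt_of_hasDerivAt hy hx hyx hf'
    rw [slope_def_field, div_lt_iff₀ (sub_pos.mpr hyx)] at hslope
    linarith
  · have hslope : 0 < slope f x y := hf.lt_slope_of_hasDerivAt hx hy hxy hf'
    rw [slope_def_field, lt_div_iff₀ (sub_pos.mpr hxy)] at hslope
    linarith

lemma div_one_sub_eq_iff {K : Type*} [Field K] {y s : K} (hy : 1 - y ≠ 0) (hs : 1 + s ≠ 0) :
    y / (1 - y) = s ↔ y = s / (1 + s) := by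
  rw [div_eq_iff hy, eq_div_iff hs]
  constructor <;> intro h <;> linear_combination h

lemma div_one_add_mem_Ioo {K : Type*} [Field K] [LinearOrder K] [IsStrictOrderedRing K] {s : K}
    (hs : 0 < s) : s / (1 + s) ∈ Ioo 0 1 :=
  ⟨by positivity, (div_lt_one (by positivity)).mpr (by linarith)⟩

lemma rpow_div_natCast_pow {r : ℝ} (hr : 0 ≤ r) (p : ℝ) {k : ℕ} (hk : k ≠ 0) :
    (r ^ (p / k)) ^ k = r ^ p := by
  rw [← Real.rpow_mul_natCast hr, div_mul_cancel₀ p (Nat.cast_ne_zero.mpr hk)]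

lemma odds_pow_eq_rpow_iff {y r p : ℝ} {k : ℕ} (hy : y ∈ Ioo 0 1) (hr : 0 ≤ r) (hk : k ≠ 0) :
    (y / (1 - y)) ^ k = r ^ p ↔ y = r ^ (p / k) / (1 + r ^ (p / k)) := by
  have hy' : 0 < 1 - y := sub_pos.mpr hy.2
  have hs : 0 ≤ r ^ (p / k) := Real.rpow_nonneg hr _
  rw [← rpow_div_natCast_pow hr p hk, pow_left_inj₀ (div_nonneg hy.1.le hy'.le) hs hk,
    div_one_sub_eq_iff hy'.ne' (by positivity)]

section WeightedPowerSum

variable {a b : ℝ} {m : ℕ}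

lemma strictConvexOn_weighted_one_sub_pow_add_pow (ha : 0 < a) (hb : 0 < b) (hm : 2 ≤ m) :
    StrictConvexOn ℝ (Icc 0 1) fun y : ℝ => a * (1 - y) ^ m + b * y ^ m := by
  have hpow : StrictConvexOn ℝ (Ici 0) fun y : ℝ => y ^ m := strictConvexOn_pow hm
  have hreflect : StrictConvexOn ℝ (Icc 0 1) fun y : ℝ => (1 - y) ^ m :=
    (strictConvexOn_comp_affineMap hpow (AffineEquiv.constVSub ℝ (1 : ℝ)).toAffineMap
      (AffineEquiv.injective _)).subset (fun _ hy => sub_nonneg.mpr hy.2) (convex_Icc 0 1)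
  exact (strictConvexOn_const_mul ha hreflect).add
    (strictConvexOn_const_mul hb (hpow.subset Icc_subset_Ici_self (convex_Icc 0 1)))

lemma hasDerivAt_weighted_one_sub_pow_add_pow (a b : ℝ) (m : ℕ) (y : ℝ) :
    HasDerivAt (fun y : ℝ => a * (1 - y) ^ m + b * y ^ m)
      (m * (b * y ^ (m - 1) - a * (1 - y) ^ (m - 1))) y := by
  have hreflect : HasDerivAt (fun y : ℝ => 1 - y) (-1) y := (hasDerivAt_id y).const_sub 1
  refine (((hreflect.pow m).const_mul a).add ((hasDerivAt_pow m y).const_mul b)).congr_deriv ?_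
  ring

lemma weighted_one_sub_pow_add_pow_lt_of_odds_pow_eq (ha : 0 < a) (hb : 0 < b) (hm : 2 ≤ m)
    {y z : ℝ} (hz : z ∈ Ioo 0 1) (hodds : (z / (1 - z)) ^ (m - 1) = a / b) (hy : y ∈ Icc 0 1)
    (hne : y ≠ z) :
    a * (1 - z) ^ m + b * z ^ m < a * (1 - y) ^ m + b * y ^ m := by
  have hz' : 0 < 1 - z := sub_pos.mpr hz.2
  have hcrit : b * z ^ (m - 1) - a * (1 - z) ^ (m - 1) = 0 := by
    rw [div_pow, div_eq_div_iff (by positivity) hb.ne'] at hodds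
    linear_combination hodds
  have hderiv := hasDerivAt_weighted_one_sub_pow_add_pow a b m z
  rw [hcrit, mul_zero] at hderiv
  exact lt_of_strictConvexOn_of_hasDerivAt_zero
    (strictConvexOn_weighted_one_sub_pow_add_pow ha hb hm) (Ioo_subset_Icc_self hz) hderiv hy hne

end WeightedPowerSum

lemma pow_succ_mul_div_mul_pow_succ {K : Type*} [Field K] {u v : K} (hu : u ≠ 0) (hv : v ≠ 0)
    (k : ℕ) : u ^ (k + 1) * v / (u * v ^ (k + 1)) = (u / v) ^ k := by
  rw [div_pow, div_eq_div_iff (by positivity) (by positivity)]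
  ring

/-- For `n ≥ 4`, `m ≥ 2` and `x ∈ (0,1)`, the function
`g(y) = x^{n−2}(1−x)(1−y)^m + x(1−x)^{n−2} y^m` on `[0,1]` attains its minimum at the unique
point `y* = s/(1+s)` with `s = (x/(1−x))^{(n−3)/(m−1)}`; equivalently `y*` is the unique
`y ∈ (0,1)` with `(y/(1−y))^{m−1} = (x/(1−x))^{n−3}`. -/
theorem ks_pointwise_min_second_level (n m : ℕ) (hn : 4 ≤ n) (hm : 2 ≤ m)
    (x : ℝ) (hx : x ∈ Set.Ioo (0:ℝ) 1) :
    let g : ℝ → ℝ := fun y => x ^ (n - 2) * (1 - x) * (1 - y) ^ m + x * (1 - x) ^ (n - 2) * y ^ m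
    let s : ℝ := (x / (1 - x)) ^ (((n : ℝ) - 3) / ((m : ℝ) - 1))
    let ystar : ℝ := s / (1 + s)
    ystar ∈ Set.Ioo (0:ℝ) 1 ∧
    (∀ y ∈ Set.Icc (0:ℝ) 1, g ystar ≤ g y) ∧
    (∀ y ∈ Set.Icc (0:ℝ) 1, y ≠ ystar → g ystar < g y) ∧
    (ystar / (1 - ystar)) ^ (m - 1) = (x / (1 - x)) ^ (n - 3) ∧
    (∀ y ∈ Set.Ioo (0:ℝ) 1,
      (y / (1 - y)) ^ (m - 1) = (x / (1 - x)) ^ (n - 3) → y = ystar) := by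
  intro g s ystar
  have hx₀ : 0 < x := hx.1
  have hx₁ : 0 < 1 - x := sub_pos.mpr hx.2
  have hr : 0 < x / (1 - x) := div_pos hx₀ hx₁
  have hystar : ystar ∈ Ioo 0 1 := div_one_add_mem_Ioo (Real.rpow_pos_of_pos hr _)
  have hodds : ∀ y ∈ Ioo (0 : ℝ) 1,
      (y / (1 - y)) ^ (m - 1) = (x / (1 - x)) ^ (n - 3) ↔ y = ystar := fun y hy => by
    have h := odds_pow_eq_rpow_iff (p := (n - 3 : ℕ)) hy hr.le (show m - 1 ≠ 0 by omega)
    rwa [Real.rpow_natCast, Nat.cast_sub (by omega), Nat.cast_sub (by omega), Nat.cast_one,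
      Nat.cast_ofNat] at h
  have hratio : x ^ (n - 2) * (1 - x) / (x * (1 - x) ^ (n - 2)) = (x / (1 - x)) ^ (n - 3) := by
    rw [show n - 2 = n - 3 + 1 by omega]
    exact pow_succ_mul_div_mul_pow_succ hx₀.ne' hx₁.ne' (n - 3)
  have hystar_odds := (hodds ystar hystar).mpr rfl
  have hlt : ∀ y ∈ Icc (0 : ℝ) 1, y ≠ ystar → g ystar < g y := fun y hy hne =>
    weighted_one_sub_pow_add_pow_lt_of_odds_pow_eq (by positivity) (by positivity) hm hystar
      (hystar_odds.trans hratio.symm) hy hne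
  have hle : ∀ y ∈ Icc (0 : ℝ) 1, g ystar ≤ g y := fun y hy => by
    rcases eq_or_ne y ystar with rfl | hne
    exacts [le_rfl, (hlt y hy hne).le]
  exact ⟨hystar, hle, hlt, hystar_odds, fun y hy => (hodds y hy).mp⟩
end

section
/- Let m ≥ 2 be an integer. For every measurable function G : [0,1] → [0,1], ∫₀¹ (x^m (1−x)(1−G(x))^m + x (1−x)^m G(x)^m) dx ≥ ∫₀¹ (x^m (1−x)^{m+1} + x^{m+1} (1−x)^m) dx, with equality if and only if G(x) = x for Lebesgue-almost every x ∈ [0,1]. -/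
open MeasureTheory

/-!
On `(0, 1)` the integrand factors as
`(x (1 - x)) ^ m * (x (g / x) ^ m + (1 - x) ((1 - g) / (1 - x)) ^ m)` with `g = G x`.
The weights `x` and `1 - x` average the points `g / x` and `(1 - g) / (1 - x)` to `1`, so by
Jensen's inequality for the strictly convex function `t ↦ t ^ m` the second factor exceeds `1`
unless the two points coincide, that is, unless `g = x`. The inequality is thus pointwise, and
equality of the integrals forces `G x = x` almost everywhere.
-/

section Pointwise

/-- The `f`-divergence of the Bernoulli law of parameter `g` from the one of parameter `x`,
not normalised by `f 1 = 0`; it measures how far `g` is from `x` in the integrand `ksIntegrand`.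
Division makes it meaningful only for `0 < x < 1`. -/
noncomputable def bernoulliFDiv (f : ℝ → ℝ) (g x : ℝ) : ℝ :=
  x * f (g / x) + (1 - x) * f ((1 - g) / (1 - x))

/-- The integrand, up to the factor `n (n - 1)`, of the two-sample Kolmogorov–Smirnov probability
at a point where the first and the second cdf take the values `x` and `g`. The exponent `p`, which
is the size `m` of the second sample in the application, is allowed to be real. -/
noncomputable def ksIntegrand (p x g : ℝ) : ℝ :=
  x ^ p * (1 - x) * (1 - g) ^ p + x * (1 - x) ^ p * g ^ p

variable {f : ℝ → ℝ} {p x g : ℝ}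

lemma bernoulliFDiv_self (f : ℝ → ℝ) (hx0 : x ≠ 0) (hx1 : x ≠ 1) :
    bernoulliFDiv f x x = f 1 := by
  rw [bernoulliFDiv, div_self hx0, div_self (sub_ne_zero.2 hx1.symm)]
  ring

lemma map_one_lt_bernoulliFDiv (hf : StrictConvexOn ℝ (Set.Ici 0) f)
    (hx : x ∈ Set.Ioo (0 : ℝ) 1) (hg : g ∈ Set.Icc (0 : ℝ) 1) (hgx : g ≠ x) :
    f 1 < bernoulliFDiv f g x := by
  have hx' : 0 < 1 - x := sub_pos.2 hx.2
  have points_ne : g / x ≠ (1 - g) / (1 - x) := by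
    rw [Ne, div_eq_div_iff hx.1.ne' hx'.ne']
    exact fun h ↦ hgx (by linarith)
  have mean_eq_one : x * (g / x) + (1 - x) * ((1 - g) / (1 - x)) = 1 := by
    rw [mul_div_cancel₀ g hx.1.ne', mul_div_cancel₀ (1 - g) hx'.ne', add_sub_cancel]
  simpa only [bernoulliFDiv, smul_eq_mul, mean_eq_one] using
    hf.2 (div_nonneg hg.1 hx.1.le) (div_nonneg (sub_nonneg.2 hg.2) hx'.le) points_ne hx.1 hx'
      (add_sub_cancel x 1)

lemma ksIntegrand_eq_mul_bernoulliFDiv (p : ℝ) (hx : x ∈ Set.Ioo (0 : ℝ) 1)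
    (hg : g ∈ Set.Icc (0 : ℝ) 1) :
    ksIntegrand p x g = (x * (1 - x)) ^ p * bernoulliFDiv (· ^ p) g x := by
  have hx' : 0 < 1 - x := sub_pos.2 hx.2
  have hxp : x ^ p ≠ 0 := (Real.rpow_pos_of_pos hx.1 p).ne'
  have hxp' : (1 - x) ^ p ≠ 0 := (Real.rpow_pos_of_pos hx' p).ne'
  rw [ksIntegrand, bernoulliFDiv, Real.mul_rpow hx.1.le hx'.le, Real.div_rpow hg.1 hx.1.le,
    Real.div_rpow (sub_nonneg.2 hg.2) hx'.le]
  field_simp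
  ring

lemma ksIntegrand_self_lt (hp : 1 < p) (hx : x ∈ Set.Ioo (0 : ℝ) 1)
    (hg : g ∈ Set.Icc (0 : ℝ) 1) (hgx : g ≠ x) :
    ksIntegrand p x x < ksIntegrand p x g := by
  rw [ksIntegrand_eq_mul_bernoulliFDiv p hx (Set.Ioo_subset_Icc_self hx),
    ksIntegrand_eq_mul_bernoulliFDiv p hx hg, bernoulliFDiv_self _ hx.1.ne' hx.2.ne]
  exact mul_lt_mul_of_pos_left (map_one_lt_bernoulliFDiv (strictConvexOn_rpow hp) hx hg hgx)
    (Real.rpow_pos_of_pos (mul_pos hx.1 (sub_pos.2 hx.2)) p)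

lemma ksIntegrand_mem_Icc (hp : 0 ≤ p) (hx : x ∈ Set.Icc (0 : ℝ) 1)
    (hg : g ∈ Set.Icc (0 : ℝ) 1) : ksIntegrand p x g ∈ Set.Icc (0 : ℝ) 1 := by
  have rpow_mem {t : ℝ} (ht : t ∈ unitInterval) : t ^ p ∈ unitInterval :=
    ⟨Real.rpow_nonneg ht.1 p, Real.rpow_le_one ht.1 ht.2 hp⟩
  have hx' : 1 - x ∈ unitInterval := Set.Icc.one_sub_mem hx
  have hg' : 1 - g ∈ unitInterval := Set.Icc.one_sub_mem hg
  have left_mem := unitInterval.mul_mem (rpow_mem hx) (rpow_mem hg')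
  have right_mem := unitInterval.mul_mem (rpow_mem hx') (rpow_mem hg)
  have convex_comb := convex_Icc (0 : ℝ) 1 left_mem right_mem hx'.1 hx.1 (sub_add_cancel 1 x)
  convert convex_comb using 1
  simp only [ksIntegrand, smul_eq_mul]
  ring

lemma ksIntegrand_natCast (m : ℕ) (x g : ℝ) :
    ksIntegrand m x g = x ^ m * (1 - x) * (1 - g) ^ m + x * (1 - x) ^ m * g ^ m := by
  simp only [ksIntegrand, Real.rpow_natCast]

lemma ksIntegrand_natCast_self (m : ℕ) (x : ℝ) :
    ksIntegrand m x x = x ^ m * (1 - x) ^ (m + 1) + x ^ (m + 1) * (1 - x) ^ m := by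
  rw [ksIntegrand_natCast]
  ring

end Pointwise

section Integral

variable {Ω : Type*} {mΩ : MeasurableSpace Ω} {μ : Measure Ω}

lemma integral_le_and_eq_iff_ae_eq_of_ae_strict_min {β : Type*} {φ : Ω → β → ℝ} {F G : Ω → β}
    (hF : Integrable (fun ω ↦ φ ω (F ω)) μ) (hG : Integrable (fun ω ↦ φ ω (G ω)) μ)
    (hmin : ∀ᵐ ω ∂μ, G ω ≠ F ω → φ ω (F ω) < φ ω (G ω)) :
    ∫ ω, φ ω (F ω) ∂μ ≤ ∫ ω, φ ω (G ω) ∂μ ∧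
      (∫ ω, φ ω (G ω) ∂μ = ∫ ω, φ ω (F ω) ∂μ ↔ ∀ᵐ ω ∂μ, G ω = F ω) := by
  have hle : (fun ω ↦ φ ω (F ω)) ≤ᵐ[μ] fun ω ↦ φ ω (G ω) := by
    filter_upwards [hmin] with ω hω
    rcases eq_or_ne (G ω) (F ω) with heq | hne
    · rw [heq]
    · exact (hω hne).le
  refine ⟨integral_mono_ae hF hG hle, ?_⟩
  rw [eq_comm, integral_eq_iff_of_ae_le hF hG hle]
  refine Filter.eventually_congr ?_
  filter_upwards [hmin] with ω hω
  exact ⟨fun heq ↦ not_imp_comm.1 hω heq.not_lt, fun heq ↦ by rw [heq]⟩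

lemma integrable_ksIntegrand [IsFiniteMeasure μ] {p : ℝ} (hp : 0 ≤ p) {F G : Ω → ℝ}
    (hFmeas : AEMeasurable F μ) (hGmeas : AEMeasurable G μ)
    (hF : ∀ᵐ ω ∂μ, F ω ∈ Set.Icc (0 : ℝ) 1) (hG : ∀ᵐ ω ∂μ, G ω ∈ Set.Icc (0 : ℝ) 1) :
    Integrable (fun ω ↦ ksIntegrand p (F ω) (G ω)) μ := by
  refine Integrable.of_mem_Icc 0 1 (by unfold ksIntegrand; fun_prop) ?_
  filter_upwards [hF, hG] with ω using ksIntegrand_mem_Icc hp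

theorem ks_unbiased_n_eq_m_add_two_general [IsFiniteMeasure μ] {p : ℝ} (hp : 1 < p)
    {F G : Ω → ℝ} (hFmeas : AEMeasurable F μ) (hGmeas : AEMeasurable G μ)
    (hF : ∀ᵐ ω ∂μ, F ω ∈ Set.Ioo (0 : ℝ) 1) (hG : ∀ᵐ ω ∂μ, G ω ∈ Set.Icc (0 : ℝ) 1) :
    ∫ ω, ksIntegrand p (F ω) (F ω) ∂μ ≤ ∫ ω, ksIntegrand p (F ω) (G ω) ∂μ ∧
      (∫ ω, ksIntegrand p (F ω) (G ω) ∂μ = ∫ ω, ksIntegrand p (F ω) (F ω) ∂μ ↔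
        ∀ᵐ ω ∂μ, G ω = F ω) := by
  have hp0 : 0 ≤ p := zero_le_one.trans hp.le
  have hF' : ∀ᵐ ω ∂μ, F ω ∈ Set.Icc (0 : ℝ) 1 := hF.mono fun _ h ↦ Set.Ioo_subset_Icc_self h
  refine integral_le_and_eq_iff_ae_eq_of_ae_strict_min (φ := fun ω ↦ ksIntegrand p (F ω))
    (integrable_ksIntegrand hp0 hFmeas hFmeas hF' hF')
    (integrable_ksIntegrand hp0 hFmeas hGmeas hF' hG) ?_
  filter_upwards [hF, hG] with ω using ksIntegrand_self_lt hp

end Integral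

/-- Unbiasedness half of Theorem 3 for `n = m + 2`: for every measurable `G : [0,1] → [0,1]`,
`∫₀¹ (x^m (1−x)(1−G(x))^m + x (1−x)^m G(x)^m) dx ≥ ∫₀¹ (x^m (1−x)^{m+1} + x^{m+1} (1−x)^m) dx`,
with equality iff `G(x) = x` for a.e. `x ∈ [0,1]`. -/
theorem ks_unbiased_n_eq_m_add_two (m : ℕ) (hm : 2 ≤ m)
    (G : ℝ → ℝ) (hGmeas : Measurable G)
    (hG : ∀ x ∈ Set.Icc (0:ℝ) 1, G x ∈ Set.Icc (0:ℝ) 1) :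
    (∫ x in Set.Icc (0:ℝ) 1,
        (x ^ m * (1 - x) * (1 - G x) ^ m + x * (1 - x) ^ m * (G x) ^ m) ≥
      ∫ x in Set.Icc (0:ℝ) 1, (x ^ m * (1 - x) ^ (m + 1) + x ^ (m + 1) * (1 - x) ^ m)) ∧
    ((∫ x in Set.Icc (0:ℝ) 1,
        (x ^ m * (1 - x) * (1 - G x) ^ m + x * (1 - x) ^ m * (G x) ^ m) =
      ∫ x in Set.Icc (0:ℝ) 1, (x ^ m * (1 - x) ^ (m + 1) + x ^ (m + 1) * (1 - x) ^ m)) ↔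
      (∀ᵐ x ∂(volume.restrict (Set.Icc (0:ℝ) 1)), G x = x)) := by
  have hmem : ∀ᵐ x ∂volume.restrict (Set.Icc (0 : ℝ) 1), x ∈ Set.Ioo (0 : ℝ) 1 := by
    rw [← restrict_Ioo_eq_restrict_Icc]
    exact ae_restrict_mem measurableSet_Ioo
  have hGmem := ae_restrict_of_forall_mem (μ := volume) measurableSet_Icc hG
  simp only [← ksIntegrand_natCast_self, ← ksIntegrand_natCast]
  exact ks_unbiased_n_eq_m_add_two_general (Nat.one_lt_cast.2 hm) aemeasurable_id'
    hGmeas.aemeasurable hmem hGmem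
end

section
/- Let n and m be integers with n > m ≥ 2, n ≥ 4 and n ≠ m + 2, and define G : (0,1) → (0,1) by G(x) = s/(1+s) with s = (x/(1−x))^{(n−3)/(m−1)}. Then ∫₀¹ (x^{n−2}(1−x)(1−G(x))^m + x(1−x)^{n−2} G(x)^m) dx < ∫₀¹ (x^{n−2}(1−x)^{m+1} + x^{m+1}(1−x)^{n−2}) dx. -/
/-!
Fix `x ∈ (0, 1)` and put `a = x ^ (n - 2) * (1 - x)` and `b = x * (1 - x) ^ (n - 2)`. The strictly
convex function `g ↦ a * (1 - g) ^ m + b * g ^ m` is minimal where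
`a * (1 - g) ^ (m - 1) = b * g ^ (m - 1)`, that is, where
`(g / (1 - g)) ^ (m - 1) = (x / (1 - x)) ^ (n - 3)`, and `g = G x` is the solution of this equation.
So the left integrand is the minimum of this function, while the right integrand is its value at
`g = x`. As `n ≠ m + 2`, the exponent `(n - 3) / (m - 1)` is not `1`, so `G x ≠ x` unless
`x = 1 / 2`, and the inequality between the integrands is strict almost everywhere.
-/

open MeasureTheory Set

section ConvexPowers

variable {p a b g y : ℝ}

lemma rpow_add_mul_sub_lt_rpow (hp : 1 < p) (hg : 0 < g) (hy : 0 ≤ y) (hne : y ≠ g) :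
    g ^ p + p * g ^ (p - 1) * (y - g) < y ^ p := by
  have hs : -1 ≤ y / g - 1 := by linarith [div_nonneg hy hg.le]
  have hs' : y / g - 1 ≠ 0 := by rwa [sub_ne_zero, Ne, div_eq_one_iff_eq hg.ne']
  calc g ^ p + p * g ^ (p - 1) * (y - g)
      = (1 + p * (y / g - 1)) * g ^ p := by rw [Real.rpow_sub_one hg.ne']; field_simp
    _ < (1 + (y / g - 1)) ^ p * g ^ p := by
        gcongr
        exact one_add_mul_self_lt_rpow_one_add hs hs' hp
    _ = y ^ p := by
        rw [add_sub_cancel, Real.div_rpow hy hg.le, div_mul_cancel₀ _ (by positivity)]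

/-- At the critical point `g` the slopes of the two tangent lines cancel. -/
lemma mul_one_sub_rpow_add_mul_rpow_lt (hp : 1 < p) (ha : 0 < a) (hb : 0 < b)
    (hg : g ∈ Ioo 0 1) (hy : y ∈ Icc 0 1) (hne : y ≠ g)
    (hcrit : a * (1 - g) ^ (p - 1) = b * g ^ (p - 1)) :
    a * (1 - g) ^ p + b * g ^ p < a * (1 - y) ^ p + b * y ^ p := by
  have htangent : g ^ p + p * g ^ (p - 1) * (y - g) < y ^ p :=
    rpow_add_mul_sub_lt_rpow hp hg.1 hy.1 hne
  have htangent' : (1 - g) ^ p + p * (1 - g) ^ (p - 1) * ((1 - y) - (1 - g)) < (1 - y) ^ p :=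
    rpow_add_mul_sub_lt_rpow hp (sub_pos.2 hg.2) (sub_nonneg.2 hy.2) (by simpa using hne)
  calc a * (1 - g) ^ p + b * g ^ p
      = a * ((1 - g) ^ p + p * (1 - g) ^ (p - 1) * ((1 - y) - (1 - g))) +
          b * (g ^ p + p * g ^ (p - 1) * (y - g)) := by
        linear_combination p * (y - g) * hcrit
    _ < a * (1 - y) ^ p + b * y ^ p := by gcongr

end ConvexPowers

/-- The cdf on `(0, 1)` whose odds at `x` are the `p`-th power of the odds `x / (1 - x)`; the
alternative `G` of the theorem is the case `p = (n - 3) / (m - 1)`. -/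
noncomputable def oddsPow (p x : ℝ) : ℝ :=
  (x / (1 - x)) ^ p / (1 + (x / (1 - x)) ^ p)

section OddsPow

variable {p x : ℝ}

lemma measurable_oddsPow : Measurable (oddsPow p) := by
  unfold oddsPow
  fun_prop

lemma odds_pos (hx : x ∈ Ioo 0 1) : 0 < x / (1 - x) :=
  div_pos hx.1 (sub_pos.2 hx.2)

lemma oddsPow_mem_Ioo (hx : x ∈ Ioo 0 1) : oddsPow p x ∈ Ioo 0 1 := by
  have hs : 0 < (x / (1 - x)) ^ p := Real.rpow_pos_of_pos (odds_pos hx) p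
  exact ⟨by unfold oddsPow; positivity, (div_lt_one (by positivity)).2 (by linarith)⟩

lemma oddsPow_eq_rpow_mul_one_sub (hx : x ∈ Ioo 0 1) :
    oddsPow p x = (x / (1 - x)) ^ p * (1 - oddsPow p x) := by
  have hs : 0 < (x / (1 - x)) ^ p := Real.rpow_pos_of_pos (odds_pos hx) p
  unfold oddsPow
  field_simp
  ring

lemma oddsPow_ne_self (hp : p ≠ 1) (hx : x ∈ Ioo 0 1) (hhalf : x ≠ 1 / 2) :
    oddsPow p x ≠ x := by
  intro hfix
  have h1x : 0 < 1 - x := sub_pos.2 hx.2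
  have hodds : x / (1 - x) ≠ 1 := by
    rw [Ne, div_eq_one_iff_eq h1x.ne']
    exact fun h => hhalf (by linarith)
  have hpow : (x / (1 - x)) ^ p = (x / (1 - x)) ^ (1 : ℝ) := by
    rw [Real.rpow_one, eq_div_iff h1x.ne']
    simpa only [hfix] using (oddsPow_eq_rpow_mul_one_sub (p := p) hx).symm
  exact hp ((Real.rpow_right_inj (odds_pos hx) hodds).1 hpow)

end OddsPow

/-- `1 / (n * (n - 1))` times the density of the rejection event `1 - 1 / n ≤ D` at `x`, where `g`
is the value at `x` of the cdf of the second sample: the second largest point of the first sample is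
`x` and the second sample lies above it, or the second smallest is `x` and the second sample lies
below it. The sample sizes `n` and `m` may be real. -/
noncomputable def rejectionDensity (n m x g : ℝ) : ℝ :=
  x ^ (n - 2) * (1 - x) * (1 - g) ^ m + x * (1 - x) ^ (n - 2) * g ^ m

section RejectionDensity

variable {n m x g : ℝ}

lemma rejectionDensity_self (hx : x ∈ Ioo 0 1) :
    rejectionDensity n m x x =
      x ^ (n - 2) * (1 - x) ^ (m + 1) + x ^ (m + 1) * (1 - x) ^ (n - 2) := by
  rw [rejectionDensity, Real.rpow_add_one hx.1.ne', Real.rpow_add_one (sub_pos.2 hx.2).ne']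
  ring

lemma rejectionDensity_nonneg (hx : x ∈ Icc 0 1) (hg : g ∈ Icc 0 1) :
    0 ≤ rejectionDensity n m x g := by
  have hx0 : 0 ≤ x := hx.1
  have hg0 : 0 ≤ g := hg.1
  have h1x : 0 ≤ 1 - x := sub_nonneg.2 hx.2
  have h1g : 0 ≤ 1 - g := sub_nonneg.2 hg.2
  unfold rejectionDensity
  positivity

lemma mul_one_sub_oddsPow_rpow_eq (hm : m ≠ 1) (hx : x ∈ Ioo 0 1) :
    x ^ (n - 2) * (1 - x) * (1 - oddsPow ((n - 3) / (m - 1)) x) ^ (m - 1) =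
      x * (1 - x) ^ (n - 2) * oddsPow ((n - 3) / (m - 1)) x ^ (m - 1) := by
  have hx0 : 0 < x := hx.1
  have h1x : 0 < 1 - x := sub_pos.2 hx.2
  have hodds : 0 ≤ x / (1 - x) := (odds_pos hx).le
  set G := oddsPow ((n - 3) / (m - 1)) x with hG
  have h1G : 0 ≤ 1 - G := sub_nonneg.2 (oddsPow_mem_Ioo hx).2.le
  have hGpow : G ^ (m - 1) = x ^ (n - 3) / (1 - x) ^ (n - 3) * (1 - G) ^ (m - 1) := by
    conv_lhs => rw [hG, oddsPow_eq_rpow_mul_one_sub hx, ← hG]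
    rw [Real.mul_rpow (by positivity) h1G, ← Real.rpow_mul hodds,
      div_mul_cancel₀ _ (sub_ne_zero.2 hm), Real.div_rpow hx0.le h1x.le]
  have hexp : n - 2 = n - 3 + 1 := by ring
  rw [hGpow, hexp, Real.rpow_add_one hx0.ne', Real.rpow_add_one h1x.ne']
  field_simp

lemma rejectionDensity_oddsPow_lt (hm : 1 < m) (hx : x ∈ Ioo 0 1) (hg : g ∈ Icc 0 1)
    (hne : g ≠ oddsPow ((n - 3) / (m - 1)) x) :
    rejectionDensity n m x (oddsPow ((n - 3) / (m - 1)) x) < rejectionDensity n m x g := by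
  have hx0 : 0 < x := hx.1
  have h1x : 0 < 1 - x := sub_pos.2 hx.2
  exact mul_one_sub_rpow_add_mul_rpow_lt hm (by positivity) (by positivity) (oddsPow_mem_Ioo hx)
    hg hne (mul_one_sub_oddsPow_rpow_eq hm.ne' hx)

end RejectionDensity

section Integral

variable {a b p q : ℝ} {f g : ℝ → ℝ} {μ : Measure ℝ}

lemma intervalIntegral_lt_of_nonneg_of_ae_lt (hμ : μ (Ioc a b) ≠ 0)
    (hf : AEStronglyMeasurable f (μ.restrict (Ioc a b)))
    (hg : IntervalIntegrable g μ a b)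
    (hnonneg : ∀ᵐ x ∂μ.restrict (Ioc a b), 0 ≤ f x)
    (hlt : ∀ᵐ x ∂μ.restrict (Ioc a b), f x < g x) :
    ∫ x in a..b, f x ∂μ < ∫ x in a..b, g x ∂μ := by
  have hab : a ≤ b := (nonempty_Ioc.1 (nonempty_of_measure_ne_zero hμ)).le
  have hle : ∀ᵐ x ∂μ.restrict (Ioc a b), f x ≤ g x := hlt.mono fun _ => le_of_lt
  have hf' : IntervalIntegrable f μ a b := by
    rw [← uIoc_of_le hab] at hf hnonneg hle
    refine hg.mono_fun' hf ?_
    filter_upwards [hnonneg, hle] with x h0 h1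
    rwa [Real.norm_of_nonneg h0]
  refine intervalIntegral.integral_lt_integral_of_ae_le_of_measure_setOfPred_lt_ne_zero hab
    hf' hg hle ?_
  have hfull : {x | f x < g x} =ᵐ[μ.restrict (Ioc a b)] univ := Filter.eventuallyEq_univ.2 hlt
  simpa [measure_congr hfull] using hμ

lemma intervalIntegrable_rpow_mul_one_sub_rpow (hp : -1 < p) (hq : 0 ≤ q) :
    IntervalIntegrable (fun x : ℝ => x ^ p * (1 - x) ^ q) volume 0 1 :=
  (intervalIntegral.intervalIntegrable_rpow' hp).mul_continuousOn
    ((continuous_const.sub continuous_id).rpow_const fun _ => Or.inr hq).continuousOn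

end Integral

theorem ks_biased_second_level_general {n m : ℝ} (hn : 1 < n) (hm : 1 < m) (hne : n ≠ m + 2) :
    ∫ x in (0:ℝ)..1, (x ^ (n - 2) * (1 - x) * (1 - oddsPow ((n - 3) / (m - 1)) x) ^ m +
        x * (1 - x) ^ (n - 2) * oddsPow ((n - 3) / (m - 1)) x ^ m) <
      ∫ x in (0:ℝ)..1, (x ^ (n - 2) * (1 - x) ^ (m + 1) + x ^ (m + 1) * (1 - x) ^ (n - 2)) := by
  have hp : (n - 3) / (m - 1) ≠ 1 := by
    rw [Ne, div_eq_one_iff_eq (sub_ne_zero.2 hm.ne')]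
    exact fun h => hne (by linarith)
  have hG : Measurable (oddsPow ((n - 3) / (m - 1))) := measurable_oddsPow
  have hupper : IntervalIntegrable (fun x : ℝ => x ^ (n - 2) * (1 - x) ^ (m + 1)) volume 0 1 :=
    intervalIntegrable_rpow_mul_one_sub_rpow (by linarith) (by linarith)
  have hlower : IntervalIntegrable (fun x : ℝ => x ^ (m + 1) * (1 - x) ^ (n - 2)) volume 0 1 := by
    simpa [mul_comm] using (hupper.comp_sub_left 1).symm
  have hmem : ∀ᵐ x ∂volume.restrict (Ioc (0 : ℝ) 1), x ∈ Ioo (0 : ℝ) 1 := by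
    rw [← restrict_Ioo_eq_restrict_Ioc]
    exact ae_restrict_mem measurableSet_Ioo
  refine intervalIntegral_lt_of_nonneg_of_ae_lt (by simp)
    (Measurable.aestronglyMeasurable (by fun_prop)) (hupper.add hlower) ?_ ?_
  · filter_upwards [hmem] with x hx
    exact rejectionDensity_nonneg (Ioo_subset_Icc_self hx)
      (Ioo_subset_Icc_self (oddsPow_mem_Ioo hx))
  · filter_upwards [hmem, Measure.ae_ne _ (1 / 2)] with x hx hhalf
    exact (rejectionDensity_oddsPow_lt hm hx (Ioo_subset_Icc_self hx)
      (oddsPow_ne_self hp hx hhalf).symm).trans_eq (rejectionDensity_self hx)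

/-- Biasedness half of Theorem 3 for `n > m`: if `n > m ≥ 2`, `n ≥ 4`, `n ≠ m + 2`, and
`G(x) = s/(1+s)` with `s = (x/(1−x))^{(n−3)/(m−1)}`, then
`∫₀¹ (x^{n−2}(1−x)(1−G(x))^m + x(1−x)^{n−2} G(x)^m) dx <
 ∫₀¹ (x^{n−2}(1−x)^{m+1} + x^{m+1}(1−x)^{n−2}) dx`. -/
theorem ks_biased_second_level (n m : ℕ) (hm : 2 ≤ m) (hmn : m < n) (hn : 4 ≤ n)
    (hne : n ≠ m + 2) :
    let G : ℝ → ℝ := fun x =>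
      (x / (1 - x)) ^ (((n : ℝ) - 3) / ((m : ℝ) - 1)) /
        (1 + (x / (1 - x)) ^ (((n : ℝ) - 3) / ((m : ℝ) - 1)))
    (∫ x in (0:ℝ)..1,
        (x ^ (n - 2) * (1 - x) * (1 - G x) ^ m + x * (1 - x) ^ (n - 2) * (G x) ^ m)) <
    ∫ x in (0:ℝ)..1, (x ^ (n - 2) * (1 - x) ^ (m + 1) + x ^ (m + 1) * (1 - x) ^ (n - 2)) := by
  have hcast : (n : ℝ) - 2 = (n - 2 : ℕ) := by rw [Nat.cast_sub (by omega), Nat.cast_ofNat]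
  have h := ks_biased_second_level_general (n := n) (m := m)
    (by norm_cast; omega) (by norm_cast) (by norm_cast)
  simpa only [oddsPow, hcast, ← Nat.cast_add_one, Real.rpow_natCast] using h
end
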